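/- For all x, y, z, w ∈ 𝓡 with x ∼ z and y ∼ w, one has x ⊕ y ∼ z ⊕ w. -/

import Mathlib

/-- The ambient space `𝓡` of decimal representations: an integer part together
with a sequence of digits in `{0,…,9}`. -/
abbrev DecimalRep := ℤ × (ℕ → Fin 10)

namespace DecimalRep

open scoped Classical

/-- The truncation `[x]_k = x₀ + ∑_{i=1}^k x_i / 10^i` of `x` up to the `k`-th
digit, as a rational number. -/
def trunc (x : DecimalRep) (k : ℕ) : ℚ :=
  (x.1 : ℚ) + ∑ i ∈ Finset.range k, ((x.2 i : ℕ) : ℚ) / 10 ^ (i + 1)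

/-- The order `⪯` on `𝓡`: `x ⪯ y` iff every truncation of `x` is at most the
corresponding truncation of `y`. -/
def le (x y : DecimalRep) : Prop := ∀ k : ℕ, trunc x k ≤ trunc y k

/-- The strict order `≺` on `𝓡`. -/
def lt (x y : DecimalRep) : Prop := le x y ∧ x ≠ y

/-- Two decimal representations are equivalent ("have no gap") iff there is no
third element lying between them. -/
def equiv (x y : DecimalRep) : Prop :=
  ¬ ∃ z : DecimalRep, z ≠ x ∧ z ≠ y ∧
      ((le x z ∧ le z y) ∨ (le y z ∧ le z x))

/-- `𝓡₉`: decimal representations ending in an infinite string of nines. -/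
def allNines (x : DecimalRep) : Prop := ∃ N : ℕ, ∀ k ≥ N, x.2 k = 9

/-- `ℚ_F`: decimal representations ending in an infinite string of zeros. -/
def finiteDec (x : DecimalRep) : Prop := ∃ N : ℕ, ∀ k ≥ N, x.2 k = 0

/-- The decimal expansion map `ι : ℚ → 𝓡`, satisfying
`[ι(α)]_k = ⌊10^k·α⌋/10^k` for all `k`. -/
def iota (α : ℚ) : DecimalRep :=
  (⌊α⌋, fun k => ⟨(⌊α * 10 ^ (k + 1)⌋ % 10).toNat, by
    have h1 : (0 : ℤ) ≤ ⌊α * 10 ^ (k + 1)⌋ % 10 := Int.emod_nonneg _ (by norm_num)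
    have h2 : ⌊α * 10 ^ (k + 1)⌋ % 10 < 10 := Int.emod_lt_of_pos _ (by norm_num)
    omega⟩)

/-- `M` is a least upper bound of `W` in `(𝓡,⪯)`. -/
def IsLub (W : Set DecimalRep) (M : DecimalRep) : Prop :=
  (∀ w ∈ W, le w M) ∧ ∀ M' : DecimalRep, (∀ w ∈ W, le w M') → le M M'

/-- `M` is a greatest lower bound of `W` in `(𝓡,⪯)`. -/
def IsGlb (W : Set DecimalRep) (M : DecimalRep) : Prop :=
  (∀ w ∈ W, le M w) ∧ ∀ M' : DecimalRep, (∀ w ∈ W, le M' w) → le M' M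

/-- The least upper bound of a set in `(𝓡,⪯)` (junk value if none exists). -/
noncomputable def sup (W : Set DecimalRep) : DecimalRep :=
  if h : ∃ M, IsLub W M then h.choose else default

/-- The greatest lower bound of a set in `(𝓡,⪯)` (junk value if none exists). -/
noncomputable def inf (W : Set DecimalRep) : DecimalRep :=
  if h : ∃ M, IsGlb W M then h.choose else default

/-- Addition `x ⊕ y := sup {ι([x]_k + [y]_k) : k ∈ ℕ}` on `𝓡`. -/
noncomputable def add (x y : DecimalRep) : DecimalRep :=
  sup { z | ∃ k : ℕ, z = iota (trunc x k + trunc y k) }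

/-- The "additive inverse" map `Ψ(x₀.x₁x₂⋯) = (−1−x₀).(9−x₁)(9−x₂)⋯`. -/
def psi (x : DecimalRep) : DecimalRep :=
  (-1 - x.1, fun k => ⟨9 - (x.2 k).val, by have := (x.2 k).isLt; omega⟩)

/-- The signal map: `0` on the nonnegative part, `1` on the negative part. -/
noncomputable def sign (x : DecimalRep) : ℕ :=
  if le (iota 0) x then 0 else 1

/-- The absolute value `‖x‖ := max {x, Ψ(x)}` with respect to `⪯`. -/
noncomputable def norm (x : DecimalRep) : DecimalRep :=
  if le x (psi x) then psi x else x

/-- Multiplication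
`x ⊗ y := Ψ^(sign x + sign y) (sup {ι([‖x‖]_k · [‖y‖]_k) : k ∈ ℕ})` on `𝓡`. -/
noncomputable def mul (x y : DecimalRep) : DecimalRep :=
  psi^[sign x + sign y]
    (sup { z | ∃ k : ℕ, z = iota (trunc (norm x) k * trunc (norm y) k) })

/-- The multiplicative inverse
`x⁻¹ := Ψ^(sign x) (inf {ι(1/[‖x‖]_k) : k ∈ ℕ, [‖x‖]_k > 0})`. -/
noncomputable def inv (x : DecimalRep) : DecimalRep :=
  psi^[sign x]
    (inf { z | ∃ k : ℕ, 0 < trunc (norm x) k ∧ z = iota (1 / trunc (norm x) k) })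

/-- A sequence of rationals is Cauchy. -/
def IsCauchy (x : ℕ → ℚ) : Prop :=
  ∀ ε : ℚ, 0 < ε → ∃ N : ℕ, ∀ m n : ℕ, N ≤ m → N ≤ n → |x m - x n| < ε

/-- The upper limit `inf { sup {f k : k ≥ n} : n ∈ ℕ }` of a sequence in `𝓡`. -/
noncomputable def upperLimit (f : ℕ → DecimalRep) : DecimalRep :=
  inf { z | ∃ n : ℕ, z = sup { w | ∃ k : ℕ, n ≤ k ∧ w = f k } }

/-- The lower limit `sup { inf {f k : k ≥ n} : n ∈ ℕ }` of a sequence in `𝓡`. -/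
noncomputable def lowerLimit (f : ℕ → DecimalRep) : DecimalRep :=
  sup { z | ∃ n : ℕ, z = inf { w | ∃ k : ℕ, n ≤ k ∧ w = f k } }

end DecimalRep

/-!
Sending `x` to the real number it represents turns `⪯` into `≤` up to ties. Two representations
have a gap exactly when they represent different reals, because any rational strictly between those
reals expands to a third representation, while two representations of the same real have
truncations differing by at most one unit in the last place and so leave no room for a third.
The map also preserves least upper bounds, and the truncation sums increase to the sum of the two
reals, so `⊕` represents addition of reals and hence respects `∼`.
-/

theorem floor_mul_pow_succ_emod {R : Type*} [Ring R] [LinearOrder R] [IsStrictOrderedRing R]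
    [FloorRing R] (r : R) (b k : ℕ) :
    ⌊r * b ^ (k + 1)⌋ % b = (⌊Int.fract r * b ^ (k + 1)⌋₊ : ℤ) % b := by
  have hsplit : r * b ^ (k + 1) = Int.fract r * b ^ (k + 1) + (⌊r⌋ * b ^ (k + 1) : ℤ) := by
    push_cast
    rw [← add_mul, Int.fract_add_floor]
  have hnonneg : 0 ≤ Int.fract r * b ^ (k + 1) := mul_nonneg (Int.fract_nonneg r) (by positivity)
  rw [hsplit, Int.floor_add_intCast, Int.natCast_floor_eq_floor hnonneg, pow_succ (b : ℤ),
    ← mul_assoc, Int.add_mul_emod_self_right]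

namespace DecimalRep

open Filter Topology

/-- The integer `10 ^ k * [x]_k`: the decimal representation cut after `k` digits, with its decimal
point removed. The truncations are studied through these integers, where `<` means a difference of
at least one unit in the last place. -/
def scaledTrunc (x : DecimalRep) : ℕ → ℤ
  | 0 => x.1
  | k + 1 => 10 * scaledTrunc x k + (x.2 k : ℕ)

theorem trunc_succ (x : DecimalRep) (k : ℕ) :
    trunc x (k + 1) = trunc x k + (x.2 k : ℕ) / 10 ^ (k + 1) := by
  simp only [trunc, Finset.sum_range_succ, add_assoc]

theorem cast_scaledTrunc (x : DecimalRep) (k : ℕ) :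
    (scaledTrunc x k : ℚ) = trunc x k * 10 ^ k := by
  induction k with
  | zero => simp [scaledTrunc, trunc]
  | succ k ih =>
    rw [trunc_succ, add_mul, div_mul_cancel₀ _ (by positivity), pow_succ', mul_left_comm, ← ih]
    push_cast [scaledTrunc]
    rfl

theorem le_iff_scaledTrunc_le {x y : DecimalRep} :
    le x y ↔ ∀ k, scaledTrunc x k ≤ scaledTrunc y k := by
  refine forall_congr' fun k => ?_
  rw [← Int.cast_le (R := ℚ), cast_scaledTrunc, cast_scaledTrunc,
    mul_le_mul_iff_of_pos_right (by positivity)]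

theorem scaledTrunc_succ_ediv_ten (x : DecimalRep) (k : ℕ) :
    scaledTrunc x (k + 1) / 10 = scaledTrunc x k := by
  have := (x.2 k).isLt
  simp only [scaledTrunc]
  omega

theorem scaledTrunc_injective : Function.Injective scaledTrunc := by
  intro x y h
  refine Prod.ext (congrFun h 0) (funext fun k => Fin.ext ?_)
  have hk := congrFun h k
  have hk_succ := congrFun h (k + 1)
  simp only [scaledTrunc] at hk_succ
  omega

theorem exists_scaledTrunc_eq {g : ℕ → ℤ} (hg : ∀ k, g (k + 1) / 10 = g k) :
    ∃ x, scaledTrunc x = g := by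
  refine ⟨(g 0, fun k => ⟨(g (k + 1) % 10).toNat, by omega⟩), funext fun k => ?_⟩
  induction k with
  | zero => rfl
  | succ k ih =>
    simp only [scaledTrunc, ih, ← hg k]
    omega

theorem scaledTrunc_lt_of_le {x y : DecimalRep} {k n : ℕ} (hkn : k ≤ n)
    (h : scaledTrunc x k < scaledTrunc y k) : scaledTrunc x n < scaledTrunc y n := by
  induction n, hkn using Nat.le_induction with
  | base => exact h
  | succ n _ ih =>
    have := scaledTrunc_succ_ediv_ten x n
    have := scaledTrunc_succ_ediv_ten y n
    omega

theorem lt.eventually_scaledTrunc_lt {x y : DecimalRep} (h : lt x y) :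
    ∀ᶠ k in atTop, scaledTrunc x k < scaledTrunc y k := by
  obtain ⟨k, hk⟩ := Function.ne_iff.1 (scaledTrunc_injective.ne h.2)
  have hlt := (le_iff_scaledTrunc_le.1 h.1 k).lt_of_ne hk
  exact eventually_atTop.2 ⟨k, fun _ hn => scaledTrunc_lt_of_le hn hlt⟩

-- The `k`-th truncation of the least upper bound is the largest `k`-th truncation in `W`; these
-- maxima are compatible because dropping the last digit is monotone.
theorem exists_isLub {W : Set DecimalRep} {B : DecimalRep} (hne : W.Nonempty)
    (hB : ∀ w ∈ W, le w B) : ∃ M, IsLub W M := by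
  have hmax (k : ℕ) : ∃ m, IsGreatest ((scaledTrunc · k) '' W) m := by
    have hbdd : BddAbove ((scaledTrunc · k) '' W) :=
      ⟨scaledTrunc B k, Set.forall_mem_image.2 fun w hw => le_iff_scaledTrunc_le.1 (hB w hw) k⟩
    exact ⟨_, Int.csSup_mem (hne.image _) hbdd, fun _ => le_csSup hbdd⟩
  choose g hg using hmax
  have hg_succ (k : ℕ) : g (k + 1) / 10 = g k := by
    have hmono : Monotone fun n : ℤ => n / 10 := fun _ _ h => Int.ediv_le_ediv (by norm_num) h
    have := hmono.map_isGreatest (hg (k + 1))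
    simp only [Set.image_image, scaledTrunc_succ_ediv_ten] at this
    exact this.unique (hg k)
  obtain ⟨M, rfl⟩ := exists_scaledTrunc_eq hg_succ
  refine ⟨M, fun w hw => le_iff_scaledTrunc_le.2 fun k => (hg k).2 ⟨w, hw, rfl⟩,
    fun M' hM' => le_iff_scaledTrunc_le.2 fun k => ?_⟩
  obtain ⟨w, hw, hwM⟩ := (hg k).1
  exact hwM.symm.trans_le (le_iff_scaledTrunc_le.1 (hM' w hw) k)

theorem isLub_sup {W : Set DecimalRep} {B : DecimalRep} (hne : W.Nonempty)
    (hB : ∀ w ∈ W, le w B) : IsLub W (sup W) := by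
  have h := exists_isLub hne hB
  rw [sup, dif_pos h]
  exact h.choose_spec

/-- The real number represented by `x`, i.e. the limit of the truncations of `x`. Equivalence of
decimal representations is equality of these real numbers. -/
noncomputable def toReal (x : DecimalRep) : ℝ := x.1 + Real.ofDigits x.2

theorem cast_trunc (x : DecimalRep) (k : ℕ) :
    (trunc x k : ℝ) = x.1 + ∑ i ∈ Finset.range k, Real.ofDigitsTerm x.2 i := by
  simp [trunc, Real.ofDigitsTerm, div_eq_mul_inv]

theorem trunc_monotone (x : DecimalRep) : Monotone (trunc x) :=
  monotone_nat_of_le_succ fun k => by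
    rw [trunc_succ]
    exact le_add_of_nonneg_right (by positivity)

theorem tendsto_trunc (x : DecimalRep) :
    Tendsto (fun k => (trunc x k : ℝ)) atTop (𝓝 (toReal x)) := by
  simp only [cast_trunc]
  exact Real.summable_ofDigitsTerm.hasSum.tendsto_sum_nat.const_add _

theorem trunc_le_toReal (x : DecimalRep) (k : ℕ) : trunc x k ≤ toReal x :=
  (Rat.cast_mono.comp (trunc_monotone x)).ge_of_tendsto (tendsto_trunc x) k

theorem toReal_mul_pow (x : DecimalRep) (k : ℕ) :
    toReal x * 10 ^ k = scaledTrunc x k + Real.ofDigits fun i => x.2 (i + k) := by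
  have hscaled : (scaledTrunc x k : ℝ) = trunc x k * 10 ^ k := mod_cast cast_scaledTrunc x k
  rw [hscaled, cast_trunc, toReal, Real.ofDigits_eq_sum_add_ofDigits x.2 k]
  push_cast
  field

theorem scaledTrunc_le (x : DecimalRep) (k : ℕ) : scaledTrunc x k ≤ toReal x * 10 ^ k := by
  rw [toReal_mul_pow]
  exact le_add_of_nonneg_right (Real.ofDigits_nonneg _)

theorem toReal_mul_pow_le (x : DecimalRep) (k : ℕ) :
    toReal x * 10 ^ k ≤ scaledTrunc x k + 1 := by
  rw [toReal_mul_pow]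
  gcongr
  exact Real.ofDigits_le_one _

theorem toReal_mono {x y : DecimalRep} (h : le x y) : toReal x ≤ toReal y :=
  le_of_tendsto_of_tendsto' (tendsto_trunc x) (tendsto_trunc y) fun k => mod_cast h k

theorem le_of_toReal_lt {x y : DecimalRep} (h : toReal x < toReal y) : le x y := by
  refine le_iff_scaledTrunc_le.2 fun k => ?_
  by_contra! hlt
  refine h.not_ge (le_of_mul_le_mul_right ?_ (show (0 : ℝ) < 10 ^ k by positivity))
  calc
    toReal y * 10 ^ k ≤ scaledTrunc y k + 1 := toReal_mul_pow_le y k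
    _ ≤ scaledTrunc x k := mod_cast hlt
    _ ≤ toReal x * 10 ^ k := scaledTrunc_le x k

theorem lt_of_toReal_lt {x y : DecimalRep} (h : toReal x < toReal y) : lt x y :=
  ⟨le_of_toReal_lt h, fun hxy => h.ne (congrArg toReal hxy)⟩

theorem iota_snd (a : ℚ) : (iota a).2 = Real.digits (Int.fract (a : ℝ)) 10 := by
  funext k
  have hcast : ⌊a * 10 ^ (k + 1)⌋ = ⌊(a : ℝ) * (10 : ℕ) ^ (k + 1)⌋ := by
    rw [← Rat.floor_cast (α := ℝ)]
    push_cast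
    rfl
  ext
  simp only [iota, Real.digits, hcast, Fin.val_ofNat]
  have := floor_mul_pow_succ_emod (a : ℝ) 10 k
  omega

theorem toReal_iota (a : ℚ) : toReal (iota a) = a := by
  rw [toReal, iota_snd, Real.ofDigits_digits (by norm_num) ⟨Int.fract_nonneg _, Int.fract_lt_one _⟩]
  change (⌊a⌋ : ℝ) + Int.fract (a : ℝ) = a
  rw [← Rat.floor_cast (α := ℝ), Int.floor_add_fract]

theorem toReal_lt_toReal_iff {x y : DecimalRep} :
    toReal x < toReal y ↔ ∃ z, lt x z ∧ lt z y := by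
  constructor
  · intro h
    obtain ⟨q, hxq, hqy⟩ := exists_rat_btwn h
    rw [← toReal_iota q] at hxq hqy
    exact ⟨iota q, lt_of_toReal_lt hxq, lt_of_toReal_lt hqy⟩
  · rintro ⟨z, hxz, hzy⟩
    obtain ⟨k, hxz, hzy⟩ :=
      (hxz.eventually_scaledTrunc_lt.and hzy.eventually_scaledTrunc_lt).exists
    refine lt_of_mul_lt_mul_right ?_ (show (0 : ℝ) ≤ 10 ^ k by positivity)
    calc
      toReal x * 10 ^ k ≤ scaledTrunc x k + 1 := toReal_mul_pow_le x k
      _ < scaledTrunc y k := mod_cast (Int.add_one_le_of_lt hxz).trans_lt hzy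
      _ ≤ toReal y * 10 ^ k := scaledTrunc_le y k

theorem equiv_iff_not_exists_lt {x y : DecimalRep} :
    equiv x y ↔ (¬∃ z, lt x z ∧ lt z y) ∧ ¬∃ z, lt y z ∧ lt z x := by
  simp only [equiv, lt, not_exists]
  grind

theorem equiv_iff_toReal_eq {x y : DecimalRep} : equiv x y ↔ toReal x = toReal y := by
  rw [equiv_iff_not_exists_lt, ← toReal_lt_toReal_iff, ← toReal_lt_toReal_iff, not_lt, not_lt,
    and_comm, ← le_antisymm_iff]

theorem IsLub.isLUB_toReal {W : Set DecimalRep} {M : DecimalRep} (hM : IsLub W M) :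
    IsLUB (toReal '' W) (toReal M) := by
  refine ⟨Set.forall_mem_image.2 fun w hw => toReal_mono (hM.1 w hw), fun r hr => ?_⟩
  refine le_of_forall_lt_rat_imp_le fun q hrq => ?_
  rw [← toReal_iota q] at hrq ⊢
  exact toReal_mono (hM.2 _ fun w hw => le_of_toReal_lt ((hr ⟨w, hw, rfl⟩).trans_lt hrq))

theorem isLub_add (x y : DecimalRep) :
    IsLub (Set.range fun k => iota (trunc x k + trunc y k)) (add x y) := by
  have hadd : add x y = sup (Set.range fun k => iota (trunc x k + trunc y k)) := by
    simp only [add, Set.range, eq_comm]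
  obtain ⟨q, hq⟩ := exists_rat_gt (toReal x + toReal y)
  rw [hadd]
  refine isLub_sup (B := iota q) (Set.range_nonempty _) (Set.forall_mem_range.2 fun k => ?_)
  apply le_of_toReal_lt
  rw [toReal_iota, toReal_iota, Rat.cast_add]
  exact (add_le_add (trunc_le_toReal x k) (trunc_le_toReal y k)).trans_lt hq

theorem toReal_add (x y : DecimalRep) : toReal (add x y) = toReal x + toReal y := by
  have hlub := (isLub_add x y).isLUB_toReal
  rw [← Set.range_comp] at hlub
  simp only [Function.comp_def, toReal_iota, Rat.cast_add] at hlub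
  have hmono (x : DecimalRep) : Monotone fun k => (trunc x k : ℝ) :=
    Rat.cast_mono.comp (trunc_monotone x)
  exact hlub.unique <| isLUB_of_tendsto_atTop ((hmono x).add (hmono y))
    ((tendsto_trunc x).add (tendsto_trunc y))

end DecimalRep

open DecimalRep in
/-- Addition on `𝓡` respects the equivalence `∼`. -/
theorem add_equiv_add (x y z w : DecimalRep) (hxz : equiv x z) (hyw : equiv y w) :
    equiv (add x y) (add z w) := by
  rw [equiv_iff_toReal_eq] at hxz hyw ⊢
  rw [toReal_add, toReal_add, hxz, hyw]
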